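/- Let n ≥ 2 and let S ⊆ ℝⁿ be a convex surface. Then S is a convex quadric if and only if there exists an affine isometry f : ℝⁿ → ℝⁿ such that f(S) is one of the following sets, with all scalars a_i involved positive: (1) {x : a₁x₁² + ⋯ + a_k x_k² = 1} for some 1 ≤ k ≤ n; (2) {x : a₁x₁² − a₂x₂² − ⋯ − a_k x_k² = 1 and x₁ ≥ 0} for some 2 ≤ k ≤ n; (3) {x : x₁ = 0}; (4) {x : a₁x₁² − a₂x₂² − ⋯ − a_k x_k² = 0 and x₁ ≥ 0} for some 2 ≤ k ≤ n; (5) {x : a₁x₁² + ⋯ + a_{k−1} x_{k−1}² = x_k} for some 2 ≤ k ≤ n. -/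

import Mathlib

open Set Metric RealInnerProductSpace

noncomputable section

/-- Euclidean n-space. -/
abbrev En (n : ℕ) := EuclideanSpace ℝ (Fin n)

/-- A quadric surface in ℝⁿ: the zero set of a quadratic polynomial whose quadratic
part (given by a symmetric matrix) is not identically zero. -/
def IsQuadricSurface {n : ℕ} (Q : Set (En n)) : Prop :=
  ∃ (a : Matrix (Fin n) (Fin n) ℝ) (b : Fin n → ℝ) (c : ℝ),
    a.IsSymm ∧ a ≠ 0 ∧
    Q = {x : En n | (∑ i, ∑ k, a i k * x i * x k) + 2 * (∑ i, b i * x i) + c = 0}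

/-- A real quadric surface: a nonempty quadric surface. -/
def IsRealQuadricSurface {n : ℕ} (Q : Set (En n)) : Prop :=
  IsQuadricSurface Q ∧ Q.Nonempty

/-- The set of connected components of a subset `F` of a topological space. -/
def componentsIn {α : Type*} [TopologicalSpace α] (F : Set α) : Set (Set α) :=
  {C | ∃ x ∈ F, C = connectedComponentIn F x}

/-- A convex quadric: the frontier of a convex connected component of the complement
of a real quadric surface. -/
def IsConvexQuadric {n : ℕ} (S : Set (En n)) : Prop :=
  ∃ Q U : Set (En n), IsRealQuadricSurface Q ∧ U ∈ componentsIn Qᶜ ∧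
    Convex ℝ U ∧ S = frontier U

/-- A convex surface in ℝⁿ: the frontier of a convex set with nonempty interior that is
distinct from ℝⁿ. -/
def IsConvexSurface {n : ℕ} (S : Set (En n)) : Prop :=
  ∃ K : Set (En n), Convex ℝ K ∧ (interior K).Nonempty ∧ K ≠ Set.univ ∧ S = frontier K

/-- Abstract quadratic function. -/
def IsQuad {n : ℕ} (p : En n → ℝ) : Prop :=
  ∃ (T : En n →ₗ[ℝ] En n) (b : En n) (c : ℝ), T.IsSymmetric ∧ T ≠ 0 ∧
    ∀ x, p x = inner ℝ x (T x) + 2 * inner ℝ b x + c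

lemma inner_coord {n : ℕ} (x y : En n) : inner ℝ x y = ∑ i, x i * y i := by
  simp [PiLp.inner_apply, mul_comm]

lemma isQuad_of_surface {n : ℕ} {Q : Set (En n)} (h : IsQuadricSurface Q) :
    ∃ p, IsQuad p ∧ Q = {x | p x = 0} := by
  obtain ⟨a, b, c, ha, h0, rfl⟩ := h
  refine ⟨_, ⟨Matrix.toEuclideanLin a, WithLp.toLp 2 b, c, ?_, ?_, fun x => rfl⟩, ?_⟩
  · rw [Matrix.isSymmetric_toEuclideanLin_iff]
    ext i j
    simp [ha.apply]
  · intro h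
    apply h0
    exact Matrix.toEuclideanLin.injective (by simpa using h)
  · ext x
    simp only [mem_ofPred_eq]
    rw [inner_coord, inner_coord]
    have : ∀ i, (Matrix.toEuclideanLin a x) i = ∑ k, a i k * x k := by
      intro i
      simp [Matrix.toEuclideanLin, Matrix.mulVec, dotProduct]
    simp only [this, Finset.mul_sum]
    have h2 : ∀ i k, x i * (a i k * x k) = a i k * x i * x k := by intros; ring
    simp only [h2]

lemma surface_of_isQuad {n : ℕ} {p : En n → ℝ} (h : IsQuad p) :
    IsQuadricSurface {x | p x = 0} := by
  obtain ⟨T, b, c, hT, h0, hp⟩ := h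
  obtain ⟨a, rfl⟩ := Matrix.toEuclideanLin.surjective T
  rw [Matrix.isSymmetric_toEuclideanLin_iff] at hT
  refine ⟨a, b, c, ?_, ?_, ?_⟩
  · ext i j
    simpa using hT.apply j i |>.symm
  · rintro rfl
    exact h0 (by simp)
  · ext x
    simp only [mem_ofPred_eq, hp]
    rw [inner_coord, inner_coord]
    have : ∀ i, (Matrix.toEuclideanLin a x) i = ∑ k, a i k * x k := by
      intro i
      simp [Matrix.toEuclideanLin, Matrix.mulVec, dotProduct]
    simp only [this, Finset.mul_sum]
    have h2 : ∀ i k, x i * (a i k * x k) = a i k * x i * x k := by intros; ring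
    simp only [h2]

lemma IsQuad.neg {n : ℕ} {p : En n → ℝ} (h : IsQuad p) : IsQuad (fun x => - p x) := by
  obtain ⟨T, b, c, hT, h0, hp⟩ := h
  refine ⟨-T, -b, -c, ?_, by simpa using h0, fun x => ?_⟩
  · intro x y
    simp [hT x y]
  · simp [hp]; ring

lemma IsQuad.comp {n : ℕ} {p : En n → ℝ} (h : IsQuad p) (f : En n ≃ᵃⁱ[ℝ] En n) :
    IsQuad (fun x => p (f x)) := by
  obtain ⟨T, b, c, hT, h0, hp⟩ := h
  set L := f.linearIsometryEquiv with hL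
  have hf : ∀ x, f x = L x + f 0 := by
    intro x
    have := f.map_vadd 0 x
    simpa using this
  have key : ∀ x y, inner ℝ (L x) y = inner ℝ x (L.symm y) := by
    intro x y
    rw [← L.inner_map_map x, L.apply_symm_apply]
  refine ⟨L.symm.toLinearEquiv.toLinearMap ∘ₗ T ∘ₗ L.toLinearEquiv.toLinearMap,
    L.symm (T (f 0) + b), p (f 0), ?_, ?_, fun x => ?_⟩
  · intro x y
    have := key y (T (L x))
    have h3 := key x (T (L y))
    simp only [LinearMap.comp_apply, LinearEquiv.coe_coe, LinearIsometryEquiv.coe_toLinearEquiv]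
    rw [← h3, real_inner_comm, ← this, real_inner_comm, hT]
  · intro h
    apply h0
    ext1 x
    have := congrArg (fun g => L (g (L.symm x))) h
    simpa using this
  · simp only [LinearMap.comp_apply, LinearEquiv.coe_coe, LinearIsometryEquiv.coe_toLinearEquiv]
    rw [← key, real_inner_comm x, ← key, hf x, hp, hp (f 0)]
    have e1 : inner ℝ (f 0) (T (L x)) = inner ℝ (L x) (T (f 0)) := by
      rw [← hT, real_inner_comm]
    simp only [map_add, inner_add_left, inner_add_right, e1, real_inner_comm b]
    ring

lemma isQuad_diag {n : ℕ} (l b : Fin n → ℝ) (c : ℝ) (i0 : Fin n) (h0 : l i0 ≠ 0) :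
    IsQuad (fun x : En n => ∑ i, l i * x i ^ 2 + 2 * ∑ i, b i * x i + c) := by
  have hT : ∀ (x : En n) i, (Matrix.toEuclideanLin (Matrix.diagonal l) x) i = l i * x i := by
    intro x i
    simp [Matrix.toEuclideanLin, Matrix.mulVec_diagonal]
  refine ⟨Matrix.toEuclideanLin (Matrix.diagonal l), WithLp.toLp 2 b, c, ?_, ?_, fun x => ?_⟩
  · intro x y
    simp only [inner_coord, hT]
    refine Finset.sum_congr rfl fun i _ => by ring
  · intro h
    have := hT (EuclideanSpace.single i0 1) i0
    rw [h] at this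
    simp at this
    exact h0 this.symm
  · simp only [inner_coord, hT]
    congr 2
    exact Finset.sum_congr rfl fun i _ => by ring

lemma isl {n : ℕ} (i : Fin n) (a : ℝ) (x : En n) :
    inner ℝ (EuclideanSpace.single i a : En n) x = a * x i := by
  rw [EuclideanSpace.inner_single_left]; simp

lemma isr {n : ℕ} (i : Fin n) (a : ℝ) (x : En n) :
    inner ℝ x (EuclideanSpace.single i a : En n) = a * x i := by
  rw [real_inner_comm, isl]

lemma normal1 {n : ℕ} {p : En n → ℝ} (h : IsQuad p) :
    ∃ (f : En n ≃ᵃⁱ[ℝ] En n) (l b : Fin n → ℝ) (c : ℝ),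
      ∀ x, p (f x) = ∑ i, l i * x i ^ 2 + 2 * ∑ i, b i * x i + c := by
  obtain ⟨T, b, c, hT, h0, hp⟩ := h
  have hfr : Module.finrank ℝ (En n) = n := by simp
  set e := hT.eigenvectorBasis hfr with he
  refine ⟨e.repr.symm.toAffineIsometryEquiv, hT.eigenvalues hfr, e.repr b, c, fun x => ?_⟩
  simp only [LinearIsometryEquiv.coe_toAffineIsometryEquiv]
  rw [hp, ← e.repr.inner_map_map (e.repr.symm x), ← e.repr.inner_map_map b, inner_coord, inner_coord]
  simp only [he, hT.eigenvectorBasis_apply_self_apply]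
  simp only [← he, e.repr.apply_symm_apply]
  congr 2
  refine Finset.sum_congr rfl fun i _ => ?_
  simp
  ring

lemma normal2 {n : ℕ} {p : En n → ℝ} (h : IsQuad p) :
    ∃ (f : En n ≃ᵃⁱ[ℝ] En n) (l b : Fin n → ℝ) (c : ℝ), (∀ i, l i = 0 ∨ b i = 0) ∧
      ∀ x, p (f x) = ∑ i, l i * x i ^ 2 + 2 * ∑ i, b i * x i + c := by
  obtain ⟨f, l, b, c, hp⟩ := normal1 h
  set w : En n := WithLp.toLp 2 (fun i => - (b i / l i)) with hw
  refine ⟨(AffineIsometryEquiv.constVAdd ℝ (En n) w).trans f, l,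
    fun i => if l i = 0 then b i else 0, c - ∑ i, b i ^ 2 / l i, ?_, fun x => ?_⟩
  · intro i
    by_cases hi : l i = 0 <;> simp [hi]
  · have : ((AffineIsometryEquiv.constVAdd ℝ (En n) w).trans f) x = f (w + x) := by
      simp
    rw [this, hp]
    simp only [PiLp.add_apply, hw, Finset.mul_sum]
    have : ∀ A B C D E : ℝ, A + B - C - D + E = 0 → A + B + c = C + D + (c - E) := by
      intros; linarith
    apply this
    rw [← Finset.sum_add_distrib, ← Finset.sum_sub_distrib, ← Finset.sum_sub_distrib,
      ← Finset.sum_add_distrib]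
    refine Finset.sum_eq_zero fun i _ => ?_
    by_cases hi : l i = 0
    · simp [hi]
    · simp only [hi, if_false]
      field_simp
      ring

lemma normal3 {n : ℕ} {p : En n → ℝ} (h : IsQuad p) :
    ∃ (f : En n ≃ᵃⁱ[ℝ] En n) (l : Fin n → ℝ),
      (∃ c : ℝ, ∀ x, p (f x) = ∑ i, l i * x i ^ 2 + c) ∨
      (∃ (κ : Fin n) (m : ℝ), 0 < m ∧ l κ = 0 ∧ ∀ x, p (f x) = ∑ i, l i * x i ^ 2 - m * x κ) := by
  obtain ⟨f, l, b, c, hlb, hp⟩ := normal2 h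
  by_cases hb : b = 0
  · refine ⟨f, l, Or.inl ⟨c, fun x => ?_⟩⟩
    rw [hp]; simp [hb]
  obtain ⟨κ, hκ⟩ := Function.ne_iff.1 hb
  have hlκ : l κ = 0 := (hlb κ).resolve_right hκ
  set v : En n := WithLp.toLp 2 b with hv
  have hv0 : v ≠ 0 := by
    intro h
    apply hκ
    have := congrArg (fun x : En n => x κ) h
    simpa using this
  have hvn : 0 < ‖v‖ := norm_pos_iff.2 hv0
  set w : En n := EuclideanSpace.single κ (-‖v‖) with hw
  have hvw : ‖v‖ = ‖w‖ := by simp [hw]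
  set R := Submodule.reflection (ℝ ∙ (v - w))ᗮ with hR
  have hRv : R v = w := Submodule.reflection_sub hvw
  have hRs : ∀ x y, inner ℝ x (R y) = inner ℝ (R x) y := by
    intro x y
    rw [← R.inner_map_map (R x) y]
    congr 1
    exact (Submodule.reflection_reflection _ x).symm
  have hRc : ∀ i, l i ≠ 0 → ∀ x, (R x) i = x i := by
    intro i hi x
    have h1 : R (EuclideanSpace.single i (1:ℝ)) = EuclideanSpace.single i (1:ℝ) := by
      apply Submodule.reflection_mem_subspace_eq_self
      rw [Submodule.mem_orthogonal_singleton_iff_inner_right]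
      have hne : i ≠ κ := by rintro rfl; exact hi hlκ
      have hbi : b i = 0 := (hlb i).resolve_left hi
      rw [isr]
      simp [hv, hw, hne, hbi]
    have h2 := hRs (EuclideanSpace.single i (1:ℝ)) x
    rw [h1, isl, isl] at h2
    simpa using h2
  set d : En n := EuclideanSpace.single κ (c / (2 * ‖v‖)) with hd
  refine ⟨((AffineIsometryEquiv.constVAdd ℝ (En n) d).trans R.toAffineIsometryEquiv).trans f, l,
    Or.inr ⟨κ, 2 * ‖v‖, by positivity, hlκ, fun x => ?_⟩⟩
  have : (((AffineIsometryEquiv.constVAdd ℝ (En n) d).trans R.toAffineIsometryEquiv).trans f) x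
      = f (R (d + x)) := by simp
  rw [this, hp]
  have e1 : ∑ i, b i * (R (d + x)) i = -‖v‖ * (d + x) κ := by
    have : ∑ i, b i * (R (d + x)) i = inner ℝ v (R (d + x)) := by
      rw [inner_coord]
    rw [this, hRs, hRv, hw, isl]
  have e2 : ∑ i, l i * (R (d + x)) i ^ 2 = ∑ i, l i * x i ^ 2 := by
    refine Finset.sum_congr rfl fun i _ => ?_
    by_cases hi : l i = 0
    · simp [hi]
    · have hne : i ≠ κ := by rintro rfl; exact hi hlκ
      rw [hRc i hi]
      simp [hd, hne]
  rw [e1, e2]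
  simp [hd]
  field_simp
  ring

/-- `U` behaves like a convex component of the negativity set of `p`. -/
structure Good {n : ℕ} (p : En n → ℝ) (U : Set (En n)) : Prop where
  ne : U.Nonempty
  cvx : Convex ℝ U
  neg : ∀ x ∈ U, p x < 0
  seg : ∀ x ∈ U, ∀ y, (∀ z ∈ segment ℝ x y, p z < 0) → y ∈ U

lemma IsQuad.continuous {n : ℕ} {p : En n → ℝ} (h : IsQuad p) : Continuous p := by
  obtain ⟨T, b, c, hT, h0, hp⟩ := h
  have : Continuous T := T.continuous_of_finiteDimensional
  have h2 : p = fun x => inner ℝ x (T x) + 2 * inner ℝ b x + c := funext hp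
  rw [h2]
  fun_prop

lemma good_of_component {n : ℕ} {p : En n → ℝ} (h : Continuous p) {U : Set (En n)}
    (hU : U ∈ componentsIn {x | p x = 0}ᶜ) (hc : Convex ℝ U) :
    Good p U ∨ Good (fun x => - p x) U := by
  obtain ⟨x, hx, rfl⟩ := hU
  have hsub := connectedComponentIn_subset {x | p x = 0}ᶜ x
  have hxU : x ∈ connectedComponentIn {x | p x = 0}ᶜ x := mem_connectedComponentIn hx
  have hpre : IsPreconnected (connectedComponentIn {x | p x = 0}ᶜ x) :=
    isPreconnected_connectedComponentIn
  have hseg : ∀ y ∈ connectedComponentIn {x | p x = 0}ᶜ x, ∀ z,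
      (∀ w ∈ segment ℝ y z, p w ≠ 0) → z ∈ connectedComponentIn {x | p x = 0}ᶜ x := by
    intro y hy z hz
    rw [connectedComponentIn_eq hy]
    exact (convex_segment y z).isPreconnected.subset_connectedComponentIn
      (left_mem_segment ℝ y z) (fun w hw => hz w hw) (right_mem_segment ℝ y z)
  have hx0 : p x ≠ 0 := hx
  have hsign : ∀ y ∈ connectedComponentIn {x | p x = 0}ᶜ x, ∀ z ∈ connectedComponentIn {x | p x = 0}ᶜ x,
      p y < 0 → p z < 0 := by
    intro y hy z hz hy0
    by_contra hcon
    obtain ⟨w, hw, hw0⟩ := hpre.intermediate_value hy hz h.continuousOn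
      (⟨hy0.le, not_lt.1 hcon⟩ : (0:ℝ) ∈ Icc _ _)
    exact hsub hw hw0
  rcases lt_or_gt_of_ne hx0 with h1 | h1
  · left
    exact ⟨⟨x, hxU⟩, hc, fun y hy => hsign x hxU y hy h1,
      fun y hy z hz => hseg y hy z fun w hw => (hz w hw).ne⟩
  · right
    refine ⟨⟨x, hxU⟩, hc, fun y hy => ?_, 
      fun y hy z hz => hseg y hy z fun w hw => ?_⟩
    · have h2 : p y ≠ 0 := hsub hy
      have h3 := fun hh => hsign y hy x hxU hh
      by_contra hcon
      have : p y < 0 := lt_of_le_of_ne (by linarith) h2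
      linarith [h3 this]
    · have := hz w hw
      intro h0
      simp [h0] at this

lemma Good.comp {n : ℕ} {p : En n → ℝ} {U : Set (En n)} (h : Good p U) (f : En n ≃ᵃⁱ[ℝ] En n) :
    Good (fun x => p (f x)) (f ⁻¹' U) := by
  refine ⟨?_, ?_, fun x hx => h.neg _ hx, fun x hx y hy => ?_⟩
  · obtain ⟨x, hx⟩ := h.ne
    exact ⟨f.symm x, by simpa using hx⟩
  · exact h.cvx.affine_preimage f.toAffineEquiv.toAffineMap
  · refine h.seg _ hx _ fun z hz => ?_
    have := image_segment ℝ f.toAffineEquiv.toAffineMap x y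
    have h2 : z ∈ f.toAffineEquiv.toAffineMap '' segment ℝ x y := by
      rw [this]; exact hz
    obtain ⟨w, hw, rfl⟩ := h2
    exact hy w hw

lemma isConvexQuadric_of {n : ℕ} {p : En n → ℝ} (hp : IsQuad p) {U : Set (En n)} (hU : IsOpen U)
    (hc : Convex ℝ U) (hne : U.Nonempty) (hQ : ∃ x, p x = 0) (hd : ∀ x ∈ U, p x ≠ 0)
    (hf : frontier U ⊆ {x | p x = 0}) : IsConvexQuadric (frontier U) := by
  refine ⟨{x | p x = 0}, U, ⟨surface_of_isQuad hp, hQ⟩, ?_, hc, rfl⟩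
  obtain ⟨x, hx⟩ := hne
  refine ⟨x, hd x hx, ?_⟩
  apply subset_antisymm
  · exact hc.isPreconnected.subset_connectedComponentIn hx hd
  · have hpre : IsPreconnected (connectedComponentIn {x | p x = 0}ᶜ x) :=
      isPreconnected_connectedComponentIn
    refine hpre.subset_of_closure_inter_subset hU ⟨x, mem_connectedComponentIn (hd x hx), hx⟩ ?_
    rintro y ⟨hy, hy2⟩
    by_contra hyU
    have h1 : y ∈ frontier U := by
      rw [hU.frontier_eq]; exact ⟨hy, hyU⟩
    exact connectedComponentIn_subset _ _ hy2 (hf h1)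

lemma mem_closure_path {n : ℕ} {U : Set (En n)} {x v : En n}
    (h : ∀ t : ℝ, 0 < t → t < 1 → x + t • v ∈ U) : x ∈ closure U := by
  have hc : Filter.Tendsto (fun t : ℝ => x + t • v) (nhdsWithin 0 (Ioo 0 1)) (nhds x) := by
    have : Continuous (fun t : ℝ => x + t • v) := by fun_prop
    have h2 := this.tendsto 0
    simp only [zero_smul, add_zero] at h2
    exact h2.mono_left nhdsWithin_le_nhds
  have : (nhdsWithin (0:ℝ) (Ioo 0 1)).NeBot := by
    rw [← mem_closure_iff_nhdsWithin_neBot, closure_Ioo (by norm_num)]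
    simp
  refine mem_closure_of_tendsto hc ?_
  filter_upwards [self_mem_nhdsWithin] with t ht
  exact h t ht.1 ht.2

lemma frontier_gen {n : ℕ} {U F C : Set (En n)} (hU : IsOpen U) (hC : IsClosed C) (hUC : U ⊆ C)
    (hF : ∀ x, x ∈ F ↔ x ∈ C ∧ x ∉ U) (hcl : ∀ x ∈ F, x ∈ closure U) : frontier U = F := by
  rw [hU.frontier_eq]
  ext x
  constructor
  · rintro ⟨h1, h2⟩
    exact (hF x).2 ⟨closure_minimal hUC hC h1, h2⟩
  · intro h
    exact ⟨hcl x h, ((hF x).1 h).2⟩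

lemma sq_convex {n : ℕ} {P : Finset (Fin n)} {a : Fin n → ℝ} (ha : ∀ i ∈ P, 0 < a i)
    (x y : En n) {s t : ℝ} (hs : 0 ≤ s) (ht : 0 ≤ t) (hst : s + t = 1) :
    ∑ i ∈ P, a i * (s • x + t • y) i ^ 2 ≤ s * ∑ i ∈ P, a i * x i ^ 2 + t * ∑ i ∈ P, a i * y i ^ 2 := by
  rw [Finset.mul_sum, Finset.mul_sum, ← Finset.sum_add_distrib]
  refine Finset.sum_le_sum fun i hi => ?_
  have h1 := ha i hi
  obtain rfl : s = 1 - t := by linarith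
  simp only [PiLp.add_apply, PiLp.smul_apply, smul_eq_mul]
  have : 0 ≤ a i * ((1 - t) * t * (x i - y i) ^ 2) := by positivity
  nlinarith

lemma sq_nonneg' {n : ℕ} {P : Finset (Fin n)} {a : Fin n → ℝ} (ha : ∀ i ∈ P, 0 < a i) (x : En n) :
    0 ≤ ∑ i ∈ P, a i * x i ^ 2 :=
  Finset.sum_nonneg fun i hi => mul_nonneg (ha i hi).le (sq_nonneg _)

lemma sq_cont {n : ℕ} (P : Finset (Fin n)) (a : Fin n → ℝ) :
    Continuous (fun x : En n => ∑ i ∈ P, a i * x i ^ 2) := by fun_prop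

lemma conv1 {n : ℕ} {P : Finset (Fin n)} {a : Fin n → ℝ} (ha : ∀ i ∈ P, 0 < a i) :
    Convex ℝ {x : En n | ∑ i ∈ P, a i * x i ^ 2 < 1} := by
  intro x hx y hy s t hs ht hst
  simp only [mem_ofPred_eq] at *
  have := sq_convex ha x y hs ht hst
  rcases hs.eq_or_lt with rfl | hs
  · obtain rfl : t = 1 := by linarith
    linarith
  · nlinarith

lemma front1 {n : ℕ} {P : Finset (Fin n)} {a : Fin n → ℝ} :
    frontier {x : En n | ∑ i ∈ P, a i * x i ^ 2 < 1} = {x : En n | ∑ i ∈ P, a i * x i ^ 2 = 1} := by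
  refine frontier_gen (C := {x : En n | ∑ i ∈ P, a i * x i ^ 2 ≤ 1})
    (isOpen_lt (sq_cont P a) continuous_const) (isClosed_le (sq_cont P a) continuous_const)
    ?_ ?_ ?_
  · intro x hx
    simp only [mem_ofPred_eq] at *
    exact hx.le
  · intro x
    simp only [mem_ofPred_eq, not_lt]
    exact ⟨fun h => ⟨h.le, h.ge⟩, fun h => le_antisymm h.1 h.2⟩
  · intro x hx
    simp only [mem_ofPred_eq] at hx
    refine mem_closure_path (v := -x) fun t h0 h1 => ?_
    simp only [mem_ofPred_eq]
    have : ∑ i ∈ P, a i * (x + t • -x) i ^ 2 = (1 - t) ^ 2 * ∑ i ∈ P, a i * x i ^ 2 := by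
      rw [Finset.mul_sum]
      refine Finset.sum_congr rfl fun i _ => ?_
      simp
      ring
    rw [this, hx]
    nlinarith

lemma sum_add_single {n : ℕ} {P : Finset (Fin n)} {a : Fin n → ℝ} {k : Fin n} (hk : k ∉ P) (x : En n)
    (t : ℝ) : ∑ i ∈ P, a i * (x + t • EuclideanSpace.single k (1:ℝ)) i ^ 2 = ∑ i ∈ P, a i * x i ^ 2 := by
  refine Finset.sum_congr rfl fun i hi => ?_
  have : i ≠ k := by rintro rfl; exact hk hi
  simp [this]

lemma conv2 {n : ℕ} {P : Finset (Fin n)} {a : Fin n → ℝ} (ha : ∀ i ∈ P, 0 < a i) {k : Fin n}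
    {c : ℝ} (hc : 0 ≤ c) {a0 : ℝ} :
    Convex ℝ {x : En n | ∑ i ∈ P, a i * x i ^ 2 + c < a0 * x k ^ 2 ∧ 0 < x k} := by
  intro x hx y hy s t hs ht hst
  simp only [mem_ofPred_eq] at *
  obtain ⟨hx1, hx2⟩ := hx
  obtain ⟨hy1, hy2⟩ := hy
  have hk : (s • x + t • y) k = s * x k + t * y k := by simp
  have hpos : 0 < s * x k + t * y k := by
    rcases hs.eq_or_lt with rfl | hs
    · obtain rfl : t = 1 := by linarith
      linarith
    · have := mul_pos hs hx2
      have := mul_nonneg ht hy2.le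
      linarith
  rw [hk]
  refine ⟨?_, hpos⟩
  have h1 : 0 ≤ ∑ i ∈ P, a i * (y k * x i - x k * y i) ^ 2 :=
    Finset.sum_nonneg fun i hi => mul_nonneg (ha i hi).le (sq_nonneg _)
  set A := ∑ i ∈ P, a i * x i ^ 2
  set B := ∑ i ∈ P, a i * y i ^ 2
  set C := ∑ i ∈ P, a i * (x i * y i) with hC
  have h2 : ∑ i ∈ P, a i * (y k * x i - x k * y i) ^ 2
      = (y k) ^ 2 * A + (x k) ^ 2 * B - 2 * x k * y k * C := by
    simp only [A, B, C, Finset.mul_sum]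
    rw [← Finset.sum_add_distrib, ← Finset.sum_sub_distrib]
    exact Finset.sum_congr rfl fun i _ => by ring
  have h3 : ∑ i ∈ P, a i * (s • x + t • y) i ^ 2 = s ^ 2 * A + t ^ 2 * B + 2 * s * t * C := by
    simp only [A, B, C, Finset.mul_sum]
    rw [← Finset.sum_add_distrib, ← Finset.sum_add_distrib]
    exact Finset.sum_congr rfl fun i _ => by simp; ring
  rw [h2] at h1
  rw [h3]
  have h4 : C + c ≤ a0 * (x k * y k) := by
    have hxy : 0 < x k * y k := mul_pos hx2 hy2
    have e1 : (y k) ^ 2 * (A + c) ≤ (y k) ^ 2 * (a0 * x k ^ 2) := by gcongr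
    have e2 : (x k) ^ 2 * (B + c) ≤ (x k) ^ 2 * (a0 * y k ^ 2) := by gcongr
    have e3 : 0 ≤ c * (x k - y k) ^ 2 := by positivity
    have : (x k * y k) * (C + c) ≤ (x k * y k) * (a0 * (x k * y k)) := by nlinarith
    exact le_of_mul_le_mul_left this hxy
  have h5 : c = s ^ 2 * c + t ^ 2 * c + 2 * s * t * c := by
    have : c = (s + t) ^ 2 * c := by rw [hst]; ring
    linarith [this, (by ring : (s + t) ^ 2 * c = s ^ 2 * c + t ^ 2 * c + 2 * s * t * c)]
  have h6 : 2 * s * t * (C + c) ≤ 2 * s * t * (a0 * (x k * y k)) := by gcongr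
  have h7 : s ^ 2 * (A + c) + t ^ 2 * (B + c) < s ^ 2 * (a0 * x k ^ 2) + t ^ 2 * (a0 * y k ^ 2) := by
    rcases hs.eq_or_lt with rfl | hs
    · obtain rfl : t = 1 := by linarith
      linarith
    · have i1 : s ^ 2 * (A + c) < s ^ 2 * (a0 * x k ^ 2) := by gcongr
      have i2 : t ^ 2 * (B + c) ≤ t ^ 2 * (a0 * y k ^ 2) := by gcongr
      linarith
  nlinarith

lemma front2 {n : ℕ} {P : Finset (Fin n)} {a : Fin n → ℝ} (ha : ∀ i ∈ P, 0 < a i) {k : Fin n}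
    (hk : k ∉ P) {c : ℝ} (hc : 0 ≤ c) {a0 : ℝ} (h0 : 0 < a0) :
    frontier {x : En n | ∑ i ∈ P, a i * x i ^ 2 + c < a0 * x k ^ 2 ∧ 0 < x k}
     = {x : En n | a0 * x k ^ 2 - ∑ i ∈ P, a i * x i ^ 2 = c ∧ 0 ≤ x k} := by
  have hcs := sq_cont P a
  refine frontier_gen (C := {x : En n | ∑ i ∈ P, a i * x i ^ 2 + c ≤ a0 * x k ^ 2 ∧ 0 ≤ x k})
    ?_ ?_ ?_ ?_ ?_
  · have h1 : IsOpen {x : En n | ∑ i ∈ P, a i * x i ^ 2 + c < a0 * x k ^ 2} :=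
      isOpen_lt (by fun_prop) (by fun_prop)
    have h2 : IsOpen {x : En n | 0 < x k} := isOpen_lt (by fun_prop) (by fun_prop)
    exact h1.inter h2
  · have h1 : IsClosed {x : En n | ∑ i ∈ P, a i * x i ^ 2 + c ≤ a0 * x k ^ 2} :=
      isClosed_le (by fun_prop) (by fun_prop)
    have h2 : IsClosed {x : En n | 0 ≤ x k} := isClosed_le (by fun_prop) (by fun_prop)
    exact h1.inter h2
  · intro x hx
    exact ⟨hx.1.le, hx.2.le⟩
  · intro x
    simp only [mem_ofPred_eq]
    constructor
    · rintro ⟨h1, h2⟩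
      exact ⟨⟨by linarith, h2⟩, fun h => by linarith [h.1]⟩
    · rintro ⟨⟨h1, h2⟩, h3⟩
      refine ⟨?_, h2⟩
      rcases h2.eq_or_lt with h4 | h4
      · have := sq_nonneg' ha x
        rw [← h4] at h1 ⊢
        nlinarith
      · have : ¬ (∑ i ∈ P, a i * x i ^ 2 + c < a0 * x k ^ 2) := fun h => h3 ⟨h, h4⟩
        linarith
  · rintro x ⟨hx, hx2⟩
    refine mem_closure_path (v := EuclideanSpace.single k (1:ℝ)) fun t ht0 ht1 => ?_
    simp only [mem_ofPred_eq]
    rw [sum_add_single hk]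
    have : (x + t • EuclideanSpace.single k (1:ℝ)) k = x k + t := by simp
    rw [this]
    refine ⟨?_, by linarith⟩
    have : 0 < a0 * (2 * x k * t + t ^ 2) := by positivity
    nlinarith

lemma conv5 {n : ℕ} {P : Finset (Fin n)} {a : Fin n → ℝ} (ha : ∀ i ∈ P, 0 < a i) {k : Fin n} :
    Convex ℝ {x : En n | ∑ i ∈ P, a i * x i ^ 2 < x k} := by
  intro x hx y hy s t hs ht hst
  simp only [mem_ofPred_eq] at *
  have := sq_convex ha x y hs ht hst
  have hk : (s • x + t • y) k = s * x k + t * y k := by simp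
  rw [hk]
  rcases hs.eq_or_lt with rfl | hs
  · obtain rfl : t = 1 := by linarith
    linarith
  · nlinarith

lemma front5 {n : ℕ} {P : Finset (Fin n)} {a : Fin n → ℝ} {k : Fin n} (hk : k ∉ P) :
    frontier {x : En n | ∑ i ∈ P, a i * x i ^ 2 < x k} = {x : En n | ∑ i ∈ P, a i * x i ^ 2 = x k} := by
  have hcs := sq_cont P a
  refine frontier_gen (C := {x : En n | ∑ i ∈ P, a i * x i ^ 2 ≤ x k})
    (isOpen_lt (by fun_prop) (by fun_prop)) (isClosed_le (by fun_prop) (by fun_prop))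
    ?_ ?_ ?_
  · intro x hx
    simp only [mem_ofPred_eq] at *
    exact hx.le
  · intro x
    simp only [mem_ofPred_eq, not_lt]
    exact ⟨fun h => ⟨h.le, h.ge⟩, fun h => le_antisymm h.1 h.2⟩
  · intro x hx
    simp only [mem_ofPred_eq] at hx
    refine mem_closure_path (v := EuclideanSpace.single k (1:ℝ)) fun t h0 h1 => ?_
    simp only [mem_ofPred_eq]
    rw [sum_add_single hk, hx]
    simpa using h0

/-- general diagonal-quadratic function -/
def dg {n : ℕ} (l b : Fin n → ℝ) (c : ℝ) (x : En n) : ℝ :=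
  ∑ i, l i * x i ^ 2 + 2 * ∑ i, b i * x i + c

/-- quadratic part -/
def dq {n : ℕ} (l : Fin n → ℝ) (x : En n) : ℝ := ∑ i, l i * x i ^ 2

/-- polar part -/
def dB {n : ℕ} (l b : Fin n → ℝ) (x v : En n) : ℝ := ∑ i, l i * x i * v i + ∑ i, b i * v i

lemma dg_expand {n : ℕ} (l b : Fin n → ℝ) (c : ℝ) (x v : En n) (t : ℝ) :
    dg l b c (x + t • v) = dg l b c x + 2 * t * dB l b x v + t ^ 2 * dq l v := by
  have e1 : ∑ i, l i * (x + t • v) i ^ 2 = ∑ i, l i * x i ^ 2 + 2 * t * ∑ i, l i * x i * v i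
      + t ^ 2 * ∑ i, l i * v i ^ 2 := by
    simp only [Finset.mul_sum]
    rw [← Finset.sum_add_distrib, ← Finset.sum_add_distrib]
    exact Finset.sum_congr rfl fun i _ => by simp; ring
  have e2 : ∑ i, b i * (x + t • v) i = ∑ i, b i * x i + t * ∑ i, b i * v i := by
    simp only [Finset.mul_sum]
    rw [← Finset.sum_add_distrib]
    exact Finset.sum_congr rfl fun i _ => by simp; ring
  unfold dg dB dq
  rw [e1, e2]
  ring

/-- `U` contains the point at infinity in direction `v` -/
def AtInf {n : ℕ} (U : Set (En n)) (v : En n) : Prop :=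
  ∀ y, ∃ M : ℝ, ∀ t ≥ M, y + t • v ∈ U

lemma inf_trans {n : ℕ} {l b : Fin n → ℝ} {c : ℝ} {U : Set (En n)} (hG : Good (dg l b c) U)
    {v w : En n} (hv : ∃ x, ∃ M : ℝ, ∀ t ≥ M, x + t • v ∈ U)
    (hq : ∀ s ∈ Icc (0:ℝ) 1, dq l ((1 - s) • v + s • w) < 0) : AtInf U w := by
  intro y
  obtain ⟨x, M0, hM0⟩ := hv
  have hcq : Continuous (fun s : ℝ => dq l ((1 - s) • v + s • w)) := by
    unfold dq; fun_prop
  have hcp : Continuous (fun s : ℝ => dg l b c ((1 - s) • x + s • y)) := by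
    unfold dg; fun_prop
  have hcB : Continuous (fun s : ℝ => dB l b ((1 - s) • x + s • y) ((1 - s) • v + s • w)) := by
    unfold dB; fun_prop
  obtain ⟨s0, hs0, hmax⟩ := isCompact_Icc.exists_isMaxOn (⟨0, by simp⟩ : (Icc (0:ℝ) 1).Nonempty)
    hcq.continuousOn
  obtain ⟨C1, hC1⟩ := isCompact_Icc.exists_bound_of_continuousOn (s := Icc (0:ℝ) 1) hcp.continuousOn
  obtain ⟨C2, hC2⟩ := isCompact_Icc.exists_bound_of_continuousOn (s := Icc (0:ℝ) 1) hcB.continuousOn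
  have hδ := hq s0 hs0
  set δ := - dq l ((1 - s0) • v + s0 • w) with hδd
  have hδ' : 0 < δ := by linarith
  have hC1' : 0 ≤ C1 := (norm_nonneg _).trans (hC1 0 (by simp))
  have hC2' : 0 ≤ C2 := (norm_nonneg _).trans (hC2 0 (by simp))
  refine ⟨max M0 (max 1 ((C1 + 2 * C2 + 1) / δ)), fun t ht => ?_⟩
  have ht1 : M0 ≤ t := (le_max_left _ _).trans ht
  have ht2 : 1 ≤ t := ((le_max_left _ _).trans (le_max_right _ _)).trans ht
  have ht3 : (C1 + 2 * C2 + 1) / δ ≤ t := ((le_max_right _ _).trans (le_max_right _ _)).trans ht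
  refine hG.seg _ (hM0 t ht1) _ fun z hz => ?_
  rw [segment_eq_image] at hz
  obtain ⟨s, hs, rfl⟩ := hz
  have e : (1 - s) • (x + t • v) + s • (y + t • w)
      = ((1 - s) • x + s • y) + t • ((1 - s) • v + s • w) := by module
  simp only [e]
  rw [dg_expand]
  have i1 := (le_abs_self _).trans (hC1 s hs)
  have i2 := (le_abs_self _).trans (hC2 s hs)
  have i3 : dq l ((1 - s) • v + s • w) ≤ -δ := by
    have := hmax hs
    simp only [mem_ofPred_eq] at this
    linarith
  rw [div_le_iff₀ hδ'] at ht3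
  have j1 : 2 * t * dB l b ((1 - s) • x + s • y) ((1 - s) • v + s • w) ≤ 2 * t * C2 := by gcongr
  have j2 : t ^ 2 * dq l ((1 - s) • v + s • w) ≤ t ^ 2 * (-δ) := by gcongr
  have j3 : C1 ≤ t * C1 := by nlinarith
  have j4 : t * (C1 + 2 * C2 + 1) ≤ t * (t * δ) := by gcongr
  nlinarith

lemma inf_self {n : ℕ} {l b : Fin n → ℝ} {c : ℝ} {U : Set (En n)} (hG : Good (dg l b c) U)
    {v : En n} (hv : ∃ x, ∃ M : ℝ, ∀ t ≥ M, x + t • v ∈ U) (hq : dq l v < 0) : AtInf U v := by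
  refine inf_trans hG hv fun s _ => ?_
  have : (1 - s) • v + s • v = v := by module
  rwa [this]

lemma dq_neg {n : ℕ} (l : Fin n → ℝ) (v : En n) : dq l (-v) = dq l v := by simp [dq]

lemma ray_in {n : ℕ} {l b : Fin n → ℝ} {c : ℝ} {U : Set (En n)} (hG : Good (dg l b c) U)
    {v : En n} (hq : dq l v < 0) {x : En n} (hx : x ∈ U) (hB : dB l b x v ≤ 0) : AtInf U v := by
  refine inf_self hG ⟨x, 0, fun t ht => ?_⟩ hq
  refine hG.seg x hx _ fun z hz => ?_
  rw [segment_eq_image'] at hz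
  obtain ⟨s, hs, rfl⟩ := hz
  have e : x + s • (x + t • v - x) = x + (s * t) • v := by module
  simp only [e]
  rw [dg_expand]
  have h1 := hG.neg x hx
  have h2 : 0 ≤ s * t := mul_nonneg hs.1 ht
  nlinarith [mul_nonneg h2 (neg_nonneg.2 hB), mul_nonneg (sq_nonneg (s*t)) (neg_nonneg.2 hq.le)]

lemma inf_or {n : ℕ} {l b : Fin n → ℝ} {c : ℝ} {U : Set (En n)} (hG : Good (dg l b c) U)
    {v : En n} (hq : dq l v < 0) : AtInf U v ∨ AtInf U (-v) := by
  obtain ⟨x, hx⟩ := hG.ne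
  rcases le_total (dB l b x v) 0 with h | h
  · exact Or.inl (ray_in hG hq hx h)
  · refine Or.inr (ray_in hG (by rwa [dq_neg]) hx ?_)
    have : dB l b x (-v) = - dB l b x v := by
      simp [dB]; ring
    linarith

lemma not_both {n : ℕ} {l b : Fin n → ℝ} {c : ℝ} {U : Set (En n)} (hG : Good (dg l b c) U)
    (hQ : ∃ y, dg l b c y = 0) {v : En n} (h1 : AtInf U v) (h2 : AtInf U (-v)) : False := by
  obtain ⟨y, hy⟩ := hQ
  obtain ⟨M1, h1⟩ := h1 y
  obtain ⟨M2, h2⟩ := h2 y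
  have a1 := h1 _ (le_max_left M1 M2)
  have a2 := h2 _ (le_max_right M1 M2)
  have := hG.cvx a1 a2 (by norm_num : (0:ℝ) ≤ 1/2) (by norm_num : (0:ℝ) ≤ 1/2) (by norm_num)
  have e : (1/2:ℝ) • (y + max M1 M2 • v) + (1/2:ℝ) • (y + max M1 M2 • -v) = y := by module
  rw [e] at this
  linarith [hG.neg y this]

lemma dq_two {n : ℕ} (l : Fin n → ℝ) {i j : Fin n} (hij : i ≠ j) (s t : ℝ) :
    dq l (EuclideanSpace.single i s + EuclideanSpace.single j t) = l i * s ^ 2 + l j * t ^ 2 := by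
  unfold dq
  rw [Finset.sum_eq_add i j hij]
  · simp [hij, hij.symm]
  · intro k _ hk
    simp [hk.1, hk.2]
  · simp
  · simp

lemma inf_two {n : ℕ} {l b : Fin n → ℝ} {c : ℝ} {U : Set (En n)} (hG : Good (dg l b c) U)
    {i j : Fin n} (hij : i ≠ j) (hi : l i < 0) (hj : l j < 0) {s t : ℝ} (hs : s ≠ 0) (ht : t ≠ 0)
    (h : AtInf U (EuclideanSpace.single i s)) : AtInf U (EuclideanSpace.single j t) := by
  refine inf_trans hG ⟨0, h 0⟩ fun r hr => ?_
  have e : (1 - r) • (EuclideanSpace.single i s : En n) + r • EuclideanSpace.single j t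
     = EuclideanSpace.single i ((1 - r) * s) + EuclideanSpace.single j (r * t) := by
    ext k
    simp
  rw [e, dq_two l hij]
  rcases eq_or_ne r 0 with rfl | h0
  · have : 0 < s ^ 2 := by positivity
    nlinarith
  · have : 0 < (r * t) ^ 2 := by positivity
    nlinarith [sq_nonneg ((1 - r) * s)]

lemma single_neg' {n : ℕ} (i : Fin n) (s : ℝ) :
    (EuclideanSpace.single i (-s) : En n) = - EuclideanSpace.single i s := by
  ext k
  simp
  split_ifs <;> simp

lemma no_two_neg {n : ℕ} {l b : Fin n → ℝ} {c : ℝ} {U : Set (En n)} (hG : Good (dg l b c) U)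
    (hQ : ∃ y, dg l b c y = 0) {i j : Fin n} (hij : i ≠ j) (hi : l i < 0) (hj : l j < 0) : False := by
  have hq : dq l (EuclideanSpace.single i (1:ℝ)) < 0 := by
    have := dq_two l hij 1 0
    have e : (EuclideanSpace.single j (0:ℝ) : En n) = 0 := by ext k; simp
    rw [e, add_zero] at this
    rw [this]; simpa using hi
  rcases inf_or hG hq with h | h
  · have h2 := inf_two hG hij hi hj (by norm_num) (by norm_num : (1:ℝ) ≠ 0) h
    have h3 := inf_two hG hij.symm hj hi (by norm_num) (by norm_num : (-1:ℝ) ≠ 0) h2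
    rw [single_neg'] at h3
    exact not_both hG hQ h h3
  · have h' := h
    rw [← single_neg'] at h
    have h2 := inf_two hG hij hi hj (by norm_num) (by norm_num : (1:ℝ) ≠ 0) h
    have h3 := inf_two hG hij.symm hj hi (by norm_num) (by norm_num : (1:ℝ) ≠ 0) h2
    exact not_both hG hQ h3 h'

lemma no_line {n : ℕ} {l b : Fin n → ℝ} {c : ℝ} {U : Set (En n)} (hG : Good (dg l b c) U)
    (hQ : ∃ y, dg l b c y = 0) {v : En n} (hq : dq l v < 0) {z : En n}
    (hz : ∀ t : ℝ, dg l b c (z + t • v) < 0) : False := by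
  have key : ∀ v : En n, dq l v < 0 → (∀ t : ℝ, dg l b c (z + t • v) < 0) → AtInf U v → False := by
    intro v hq hz h
    obtain ⟨M, hM⟩ := h z
    refine not_both hG hQ h (inf_self hG ⟨z, 0, fun t _ => ?_⟩ (by rwa [dq_neg]))
    refine hG.seg _ (hM M le_rfl) _ fun w hw => ?_
    rw [segment_eq_image'] at hw
    obtain ⟨s, hs, rfl⟩ := hw
    have e : z + M • v + s • (z + t • -v - (z + M • v)) = z + (M - s * t - s * M) • v := by module
    simp only [e]
    exact hz _
  rcases inf_or hG hq with h | h
  · exact key v hq hz h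
  · refine key (-v) (by rwa [dq_neg]) (fun t => ?_) h
    have := hz (-t)
    rwa [neg_smul, ← smul_neg] at this

/-- With a negative coordinate direction `k`, the function is nonnegative on `x k = 0`. -/
lemma nonneg_on_slice {n : ℕ} {l b : Fin n → ℝ} {c : ℝ} {U : Set (En n)} (hG : Good (dg l b c) U)
    (hQ : ∃ y, dg l b c y = 0) {k : Fin n} (hk : l k < 0) (hb : b k = 0) {z : En n} (hz : z k = 0) :
    0 ≤ dg l b c z := by
  by_contra hcon
  push Not at hcon
  have hq : dq l (EuclideanSpace.single k (1:ℝ)) = l k := by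
    unfold dq
    rw [Finset.sum_eq_single k] <;> simp +contextual
  have hB : dB l b z (EuclideanSpace.single k (1:ℝ)) = 0 := by
    unfold dB
    rw [Finset.sum_eq_single k, Finset.sum_eq_single k] <;> simp +contextual [hz, hb]
  refine no_line hG hQ (by rw [hq]; exact hk) (z := z) fun t => ?_
  rw [dg_expand, hq, hB]
  nlinarith [mul_nonneg (sq_nonneg t) (neg_nonneg.2 hk.le)]

/-- The first index. -/
def z0 {n : ℕ} (hn : 2 ≤ n) : Fin n := Fin.castLE hn 0

@[simp] lemma z0_val {n : ℕ} (hn : 2 ≤ n) : (z0 hn : ℕ) = 0 := rfl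

/-- The five canonical forms. -/
def CanonBody {n : ℕ} (hn : 2 ≤ n) (F : Set (En n)) : Prop :=
  (∃ k : ℕ, 1 ≤ k ∧ k ≤ n ∧ ∃ a : Fin n → ℝ, (∀ i : Fin n, (i : ℕ) < k → 0 < a i) ∧
    F = {x : En n |
      ∑ i ∈ Finset.univ.filter (fun i : Fin n => (i : ℕ) < k), a i * x i ^ 2 = 1}) ∨
  (∃ k : ℕ, 2 ≤ k ∧ k ≤ n ∧ ∃ a : Fin n → ℝ, (∀ i : Fin n, (i : ℕ) < k → 0 < a i) ∧
    F = {x : En n |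
      a (z0 hn) * x (z0 hn) ^ 2 -
        ∑ i ∈ Finset.univ.filter (fun i : Fin n => 1 ≤ (i : ℕ) ∧ (i : ℕ) < k),
          a i * x i ^ 2 = 1 ∧ 0 ≤ x (z0 hn)}) ∨
  (F = {x : En n | x (z0 hn) = 0}) ∨
  (∃ k : ℕ, 2 ≤ k ∧ k ≤ n ∧ ∃ a : Fin n → ℝ, (∀ i : Fin n, (i : ℕ) < k → 0 < a i) ∧
    F = {x : En n |
      a (z0 hn) * x (z0 hn) ^ 2 -
        ∑ i ∈ Finset.univ.filter (fun i : Fin n => 1 ≤ (i : ℕ) ∧ (i : ℕ) < k),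
          a i * x i ^ 2 = 0 ∧ 0 ≤ x (z0 hn)}) ∨
  (∃ κ : Fin n, 1 ≤ (κ : ℕ) ∧ ∃ a : Fin n → ℝ, (∀ i : Fin n, (i : ℕ) < (κ : ℕ) → 0 < a i) ∧
    F = {x : En n |
      ∑ i ∈ Finset.univ.filter (fun i : Fin n => (i : ℕ) < (κ : ℕ)), a i * x i ^ 2 = x κ})

/-- Canonical form after an isometry. -/
def Canon {n : ℕ} (hn : 2 ≤ n) (S : Set (En n)) : Prop :=
  ∃ f : En n ≃ᵃⁱ[ℝ] En n, CanonBody hn (f '' S)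

lemma Canon.of_preimage {n : ℕ} {hn : 2 ≤ n} {S : Set (En n)} (g : En n ≃ᵃⁱ[ℝ] En n)
    (h : Canon hn (g ⁻¹' S)) : Canon hn S := by
  obtain ⟨f, hf⟩ := h
  refine ⟨g.symm.trans f, ?_⟩
  have : (g.symm.trans f) '' S = f '' (g ⁻¹' S) := by
    ext x
    constructor
    · rintro ⟨y, hy, rfl⟩
      exact ⟨g.symm y, by simpa using hy, by simp⟩
    · rintro ⟨y, hy, rfl⟩
      exact ⟨g y, hy, by simp⟩
  rw [this]
  exact hf

lemma image_eq_of {n : ℕ} (g : En n ≃ᵃⁱ[ℝ] En n) {F F' : Set (En n)} (h : ∀ x, x ∈ F ↔ g x ∈ F') :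
    g '' F = F' := by
  ext y
  constructor
  · rintro ⟨x, hx, rfl⟩
    exact (h x).1 hx
  · intro hy
    exact ⟨g.symm y, (h _).2 (by simpa using hy), by simp⟩

lemma perm_iso {n : ℕ} (σ : Equiv.Perm (Fin n)) :
    ∃ g : En n ≃ᵃⁱ[ℝ] En n, ∀ x i, (g x) i = x (σ i) := by
  refine ⟨(LinearIsometryEquiv.piLpCongrLeft 2 ℝ ℝ σ.symm).toAffineIsometryEquiv, fun x i => ?_⟩
  simp [LinearIsometryEquiv.piLpCongrLeft_apply, Equiv.piCongrLeft']

lemma exists_perm {n : ℕ} {A P : Finset (Fin n)} (h : A.card = P.card) :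
    ∃ σ : Equiv.Perm (Fin n), ∀ i, i ∈ A ↔ σ i ∈ P := by
  let e : {x // x ∈ A} ≃ {x // x ∈ P} := Finset.equivOfCardEq h
  refine ⟨e.extendSubtype, fun i => ⟨fun hi => e.extendSubtype_mem i hi, fun hi => ?_⟩⟩
  by_contra hcon
  exact e.extendSubtype_not_mem i hcon hi

lemma exists_perm2 {n : ℕ} {A P : Finset (Fin n)} (h : A.card = P.card) {a p : Fin n} (ha : a ∉ A)
    (hp : p ∉ P) : ∃ σ : Equiv.Perm (Fin n), σ a = p ∧ ∀ i, i ∈ A ↔ σ i ∈ P := by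
  obtain ⟨σ, hσ⟩ := exists_perm h
  refine ⟨σ.trans (Equiv.swap (σ a) p), by simp, fun i => ?_⟩
  rw [hσ]
  have h1 : σ a ∉ P := fun h => ha ((hσ a).2 h)
  simp only [Equiv.trans_apply]
  by_cases e1 : σ i = σ a
  · rw [e1]; simp [h1, hp]
  by_cases e2 : σ i = p
  · rw [e2]; simp [h1, hp]
  rw [Equiv.swap_apply_of_ne_of_ne e1 e2]

lemma sum_perm {n : ℕ} {A P : Finset (Fin n)} (σ : Equiv.Perm (Fin n)) (h : ∀ i, i ∈ A ↔ σ i ∈ P)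
    (a : Fin n → ℝ) (x : En n) :
    ∑ i ∈ A, a (σ i) * x (σ i) ^ 2 = ∑ i ∈ P, a i * x i ^ 2 :=
  Finset.sum_equiv σ h (fun _ _ => rfl)

lemma card_lt {n k : ℕ} (hk : k ≤ n) :
    (Finset.univ.filter (fun i : Fin n => (i : ℕ) < k)).card = k := by
  rw [Fin.card_filter_val_lt]
  exact min_eq_right hk

lemma card_lt1 {n k : ℕ} (h1 : 1 ≤ k) (hk : k ≤ n) :
    (Finset.univ.filter (fun i : Fin n => 1 ≤ (i : ℕ) ∧ (i : ℕ) < k)).card = k - 1 := by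
  have : Finset.univ.filter (fun i : Fin n => (i : ℕ) < k)
      = insert ⟨0, by omega⟩ (Finset.univ.filter (fun i : Fin n => 1 ≤ (i : ℕ) ∧ (i : ℕ) < k)) := by
    ext i
    simp [Fin.ext_iff]
    omega
  have h2 := card_lt hk
  rw [this, Finset.card_insert_of_notMem (by simp)] at h2
  omega

lemma card_le_n {n : ℕ} (P : Finset (Fin n)) : P.card ≤ n := by
  simpa using Finset.card_le_univ P

lemma card_lt_n {n : ℕ} {P : Finset (Fin n)} {k : Fin n} (hk : k ∉ P) : P.card + 1 ≤ n := by
  rw [← Finset.card_insert_of_notMem hk]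
  exact card_le_n _

lemma canon1 {n : ℕ} (hn : 2 ≤ n) {P : Finset (Fin n)} (hP : P.Nonempty) {a : Fin n → ℝ}
    (ha : ∀ i ∈ P, 0 < a i) : Canon hn {x : En n | ∑ i ∈ P, a i * x i ^ 2 = 1} := by
  obtain ⟨σ, hσ⟩ := exists_perm (card_lt (card_le_n P))
  obtain ⟨g, hg⟩ := perm_iso σ
  refine ⟨g, Or.inl ⟨P.card, hP.card_pos, card_le_n P, a ∘ σ, ?_, ?_⟩⟩
  · intro i hi
    exact ha _ ((hσ i).1 (by simpa using hi))
  · refine image_eq_of g fun x => ?_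
    simp only [mem_ofPred_eq, hg, Function.comp]
    rw [sum_perm σ hσ]

lemma canon5 {n : ℕ} (hn : 2 ≤ n) {P : Finset (Fin n)} (hP : P.Nonempty) {a : Fin n → ℝ}
    (ha : ∀ i ∈ P, 0 < a i) {k : Fin n} (hk : k ∉ P) :
    Canon hn {x : En n | ∑ i ∈ P, a i * x i ^ 2 = x k} := by
  have hlt := card_lt_n hk
  obtain ⟨σ, hσk, hσ⟩ := exists_perm2 (card_lt (card_le_n P)) (a := ⟨P.card, by omega⟩) (p := k)
    (by simp) hk
  obtain ⟨g, hg⟩ := perm_iso σ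
  refine ⟨g, Or.inr (Or.inr (Or.inr (Or.inr ⟨⟨P.card, by omega⟩, hP.card_pos, a ∘ σ, ?_, ?_⟩)))⟩
  · intro i hi
    exact ha _ ((hσ i).1 (by simpa using hi))
  · refine image_eq_of g fun x => ?_
    simp only [mem_ofPred_eq, hg, Function.comp]
    rw [sum_perm σ hσ, hσk]

lemma canon3 {n : ℕ} (hn : 2 ≤ n) (k : Fin n) (r : ℝ) : Canon hn {x : En n | x k = r} := by
  obtain ⟨g, hg⟩ := perm_iso (Equiv.swap (z0 hn) k)
  refine ⟨(AffineIsometryEquiv.constVAdd ℝ (En n) (EuclideanSpace.single k (-r))).trans g,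
    Or.inr (Or.inr (Or.inl ?_))⟩
  refine image_eq_of _ fun x => ?_
  have : ((AffineIsometryEquiv.constVAdd ℝ (En n) (EuclideanSpace.single k (-r))).trans g) x
     = g (EuclideanSpace.single k (-r) + x) := by simp
  simp only [mem_ofPred_eq, this, hg]
  simp
  constructor <;> intro h <;> linarith

lemma canon24 {n : ℕ} (hn : 2 ≤ n) {P : Finset (Fin n)} {a : Fin n → ℝ}
    (ha : ∀ i ∈ P, 0 < a i) {k : Fin n} (hk : k ∉ P) (hak : 0 < a k) {c : ℝ} (hc : 0 ≤ c) :
    Canon hn {x : En n | a k * x k ^ 2 - ∑ i ∈ P, a i * x i ^ 2 = c ∧ 0 ≤ x k} := by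
  rcases P.eq_empty_or_nonempty with rfl | hP
  · have : {x : En n | a k * x k ^ 2 - ∑ i ∈ (∅ : Finset (Fin n)), a i * x i ^ 2 = c ∧ 0 ≤ x k}
        = {x : En n | x k = √(c / a k)} := by
      ext x
      simp only [mem_ofPred_eq, Finset.sum_empty, sub_zero]
      constructor
      · rintro ⟨h1, h2⟩
        have : c / a k = x k ^ 2 := by rw [← h1]; field_simp
        rw [this, Real.sqrt_sq h2]
      · intro h
        have h1 : x k ^ 2 = c / a k := by rw [h, Real.sq_sqrt (by positivity)]
        refine ⟨by rw [h1]; field_simp, ?_⟩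
        rw [h]; positivity
    rw [this]
    exact canon3 hn k _
  have hlt := card_lt_n hk
  have hpos := hP.card_pos
  have hcard := card_lt1 (n := n) (k := P.card + 1) (by omega) hlt
  obtain ⟨σ, hσk, hσ⟩ := exists_perm2 hcard (a := (z0 hn)) (p := k) (by simp) hk
  obtain ⟨g, hg⟩ := perm_iso σ
  have hpos' : ∀ i : Fin n, (i : ℕ) < P.card + 1 → 0 < a (σ i) := by
    intro i hi
    rcases Nat.eq_zero_or_pos (i : ℕ) with h0 | h0
    · have : i = z0 hn := Fin.ext h0
      rw [this, hσk]; exact hak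
    · exact ha _ ((hσ i).1 (by simp; omega))
  refine ⟨g, ?_⟩
  rcases hc.eq_or_lt with rfl | hc
  · refine Or.inr (Or.inr (Or.inr (Or.inl ⟨P.card + 1, by omega, hlt, a ∘ σ, hpos', ?_⟩)))
    refine image_eq_of g fun x => ?_
    simp only [mem_ofPred_eq, hg, Function.comp]
    rw [sum_perm σ hσ, hσk]
  · refine Or.inr (Or.inl ⟨P.card + 1, by omega, hlt, fun i => a (σ i) / c,
      fun i hi => div_pos (hpos' i hi) hc, ?_⟩)
    refine image_eq_of g fun x => ?_
    simp only [mem_ofPred_eq, hg]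
    rw [sum_perm σ hσ (fun i => a i / c), hσk]
    have : ∑ i ∈ P, a i / c * x i ^ 2 = (∑ i ∈ P, a i * x i ^ 2) / c := by
      rw [Finset.sum_div]
      exact Finset.sum_congr rfl fun i _ => by ring
    rw [this]
    have e : a k / c * x k ^ 2 - (∑ i ∈ P, a i * x i ^ 2) / c
      = (a k * x k ^ 2 - ∑ i ∈ P, a i * x i ^ 2) / c := by ring
    rw [e, div_eq_one_iff_eq hc.ne']

lemma Good.eq_of {n : ℕ} {p : En n → ℝ} {U V : Set (En n)} (hG : Good p U) (hUV : U ⊆ V)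
    (hV : Convex ℝ V) (hVp : ∀ x ∈ V, p x < 0) : U = V := by
  refine subset_antisymm hUV fun y hy => ?_
  obtain ⟨x, hx⟩ := hG.ne
  exact hG.seg x hx y fun z hz => hVp z (hV.segment_subset (hUV hx) hy hz)

/-- positive index set -/
def posS {n : ℕ} (l : Fin n → ℝ) : Finset (Fin n) := Finset.univ.filter (fun i => 0 < l i)

lemma mem_posS {n : ℕ} {l : Fin n → ℝ} {i : Fin n} : i ∈ posS l ↔ 0 < l i := by simp [posS]

lemma sum_nonneg_case {n : ℕ} {l : Fin n → ℝ} (h : ∀ i, 0 ≤ l i) (x : En n) :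
    ∑ i, l i * x i ^ 2 = ∑ i ∈ posS l, l i * x i ^ 2 := by
  symm
  refine Finset.sum_subset (Finset.subset_univ _) fun i _ hi => ?_
  have : l i = 0 := le_antisymm (by simpa [mem_posS] using hi) (h i)
  simp [this]

lemma sum_one_neg {n : ℕ} {l : Fin n → ℝ} {k : Fin n} (hk : l k < 0) (h : ∀ i, i ≠ k → 0 ≤ l i)
    (x : En n) : ∑ i, l i * x i ^ 2 = ∑ i ∈ posS l, l i * x i ^ 2 + l k * x k ^ 2 := by
  have hkP : k ∉ posS l := by simp [mem_posS, hk.le]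
  rw [add_comm, ← Finset.sum_insert (f := fun i => l i * x i ^ 2) hkP]
  symm
  refine Finset.sum_subset (Finset.subset_univ _) fun i _ hi => ?_
  simp only [Finset.mem_insert, mem_posS, not_or, not_lt] at hi
  have : l i = 0 := le_antisymm hi.2 (h i hi.1)
  simp [this]

lemma front_pre {n : ℕ} (g : En n ≃ᵃⁱ[ℝ] En n) (U : Set (En n)) :
    g ⁻¹' frontier U = frontier (g ⁻¹' U) :=
  g.toHomeomorph.preimage_frontier U

lemma forwardB {n : ℕ} (hn : 2 ≤ n) {l : Fin n → ℝ} {k : Fin n} {m : ℝ} (hm : 0 < m) (hk : l k = 0)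
    {p : En n → ℝ} (hp : ∀ x, p x = ∑ i, l i * x i ^ 2 - m * x k) {U : Set (En n)} (hG : Good p U)
    (hQ : ∃ x, p x = 0) : Canon hn (frontier U) := by
  have hpd : p = dg l (Pi.single k (-m / 2)) 0 := by
    funext x
    rw [hp, dg, Finset.sum_eq_single (a := k) (f := fun i => (Pi.single k (-m / 2) : Fin n → ℝ) i * x i)]
    · simp; ring
    · intro i _ hi
      simp [hi]
    · simp
  have hnn : ∀ i, 0 ≤ l i := by
    intro i
    by_contra hi
    push Not at hi
    have hik : i ≠ k := by rintro rfl; linarith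
    rw [hpd] at hG hQ
    have := nonneg_on_slice hG hQ hi (by simp [hik]) (z := EuclideanSpace.single k (1:ℝ))
      (by simp [hik])
    rw [← hpd, hp, Finset.sum_eq_single k] at this
    · simp [hk] at this
      linarith
    · intro j _ hj
      simp [hj]
    · simp
  have hkP : k ∉ posS l := by simp [mem_posS, hk]
  have ha : ∀ i ∈ posS l, 0 < l i / m := fun i hi => div_pos (mem_posS.1 hi) hm
  have hiff : ∀ x, p x < 0 ↔ ∑ i ∈ posS l, l i / m * x i ^ 2 < x k := by
    intro x
    have : ∑ i ∈ posS l, l i / m * x i ^ 2 = (∑ i ∈ posS l, l i * x i ^ 2) / m := by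
      rw [Finset.sum_div]
      exact Finset.sum_congr rfl fun i _ => by ring
    rw [hp, sum_nonneg_case hnn, this, div_lt_iff₀ hm, sub_neg, mul_comm]
  have hU : U = {x : En n | ∑ i ∈ posS l, l i / m * x i ^ 2 < x k} :=
    hG.eq_of (fun x hx => (hiff x).1 (hG.neg x hx)) (conv5 ha) (fun x hx => (hiff x).2 hx)
  rw [hU, front5 hkP]
  rcases (posS l).eq_empty_or_nonempty with h0 | h0
  · rw [h0]
    simpa [eq_comm] using canon3 hn k 0
  · exact canon5 hn h0 ha hkP

lemma forwardA_neg {n : ℕ} (hn : 2 ≤ n) {l : Fin n → ℝ} {k : Fin n} {c : ℝ} (hk : l k < 0)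
    (hc : 0 ≤ c) (hl : ∀ i, i ≠ k → 0 ≤ l i)
    {p : En n → ℝ} (hp : ∀ x, p x = ∑ i, l i * x i ^ 2 + c) {U : Set (En n)} (hG : Good p U)
    (hx : ∃ x ∈ U, 0 < x k) : Canon hn (frontier U) := by
  have hkP : k ∉ posS l := by simp [mem_posS, hk.le]
  have ha' : ∀ i ∈ posS l, 0 < l i := fun i hi => mem_posS.1 hi
  have hiff : ∀ x, p x < 0 ↔ ∑ i ∈ posS l, l i * x i ^ 2 + c < (- l k) * x k ^ 2 := by
    intro x
    rw [hp, sum_one_neg hk hl]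
    constructor <;> intro h <;> linarith
  have hU : U = {x : En n | ∑ i ∈ posS l, l i * x i ^ 2 + c < (- l k) * x k ^ 2 ∧ 0 < x k} := by
    refine hG.eq_of (fun x hxU => ⟨(hiff x).1 (hG.neg x hxU), ?_⟩) (conv2 ha' hc)
      (fun x hx => (hiff x).2 hx.1)
    obtain ⟨y, hy, hyk⟩ := hx
    by_contra hcon
    push Not at hcon
    have hcont : Continuous (fun x : En n => x k) := by fun_prop
    obtain ⟨z, hz, hz0⟩ := hG.cvx.isPreconnected.intermediate_value hxU hy hcont.continuousOn
      (⟨hcon, hyk.le⟩ : (0:ℝ) ∈ Icc _ _)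
    have h1 := (hiff z).1 (hG.neg z hz)
    have h2 := sq_nonneg' ha' z
    simp only at hz0
    rw [hz0] at h1
    nlinarith
  rw [hU, front2 ha' hkP hc (by linarith)]
  have := canon24 hn (P := posS l) (a := fun i => if i = k then - l k else l i) (k := k) (c := c)
    (fun i hi => by
      have : i ≠ k := by rintro rfl; exact hkP hi
      simp [this, ha' i hi]) hkP (by simpa using hk) hc
  convert this using 6 with x
  · simp
  · refine Finset.sum_congr rfl fun i hi => ?_
    have : i ≠ k := by rintro rfl; exact hkP hi
    simp [this]

lemma forwardA {n : ℕ} (hn : 2 ≤ n) {l : Fin n → ℝ} {c : ℝ}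
    {p : En n → ℝ} (hp : ∀ x, p x = ∑ i, l i * x i ^ 2 + c) {U : Set (En n)} (hG : Good p U)
    (hQ : ∃ x, p x = 0) : Canon hn (frontier U) := by
  have hpd : p = dg l 0 c := by
    funext x
    rw [hp, dg]
    simp
  by_cases hneg : ∃ k, l k < 0
  · obtain ⟨k, hk⟩ := hneg
    have hG' := hG
    have hQ' := hQ
    rw [hpd] at hG' hQ'
    have hl : ∀ i, i ≠ k → 0 ≤ l i := by
      intro i hi
      by_contra hcon
      push Not at hcon
      exact no_two_neg hG' hQ' hi hcon hk
    have hc : 0 ≤ c := by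
      have := nonneg_on_slice hG' hQ' hk (by simp) (z := 0) (by simp)
      rw [← hpd, hp] at this
      simpa using this
    by_cases hx : ∃ x ∈ U, 0 < x k
    · exact forwardA_neg hn hk hc hl hp hG hx
    · push Not at hx
      have hG2 := hG.comp (LinearIsometryEquiv.neg ℝ).toAffineIsometryEquiv
      apply Canon.of_preimage (LinearIsometryEquiv.neg ℝ).toAffineIsometryEquiv
      rw [front_pre]
      refine forwardA_neg hn hk hc hl (fun x => ?_) hG2 ?_
      · rw [hp]
        simp
      · obtain ⟨x, hxU⟩ := hG.ne
        refine ⟨-x, by simpa using hxU, ?_⟩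
        have h1 := hx x hxU
        have h2 : x k ≠ 0 := by
          intro h0
          have := nonneg_on_slice hG' hQ' hk (by simp) h0
          rw [← hpd] at this
          linarith [hG.neg x hxU]
        have : x k < 0 := lt_of_le_of_ne h1 h2
        simpa using this
  · push Not at hneg
    have ha' : ∀ i ∈ posS l, 0 < l i := fun i hi => mem_posS.1 hi
    have hc : c < 0 := by
      obtain ⟨x, hx⟩ := hG.ne
      have := hG.neg x hx
      rw [hp, sum_nonneg_case hneg] at this
      linarith [sq_nonneg' ha' x]
    have hc' : 0 < -c := by linarith
    have ha : ∀ i ∈ posS l, 0 < l i / (-c) := fun i hi => div_pos (mem_posS.1 hi) hc'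
    have hiff : ∀ x, p x < 0 ↔ ∑ i ∈ posS l, l i / (-c) * x i ^ 2 < 1 := by
      intro x
      have : ∑ i ∈ posS l, l i / (-c) * x i ^ 2 = (∑ i ∈ posS l, l i * x i ^ 2) / (-c) := by
        rw [Finset.sum_div]
        exact Finset.sum_congr rfl fun i _ => by ring
      rw [hp, sum_nonneg_case hneg, this, div_lt_iff₀ hc']
      constructor <;> intro h <;> linarith
    have hU : U = {x : En n | ∑ i ∈ posS l, l i / (-c) * x i ^ 2 < 1} :=
      hG.eq_of (fun x hx => (hiff x).1 (hG.neg x hx)) (conv1 ha) (fun x hx => (hiff x).2 hx)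
    rw [hU, front1]
    refine canon1 hn ?_ ha
    by_contra hP
    rw [Finset.not_nonempty_iff_eq_empty] at hP
    obtain ⟨x, hx⟩ := hQ
    rw [hp, sum_nonneg_case hneg, hP] at hx
    simp at hx
    linarith

lemma forward_good {n : ℕ} (hn : 2 ≤ n) {p : En n → ℝ} (hp : IsQuad p) {U : Set (En n)}
    (hG : Good p U) (hQ : ∃ x, p x = 0) : Canon hn (frontier U) := by
  obtain ⟨f, l, h⟩ := normal3 hp
  apply Canon.of_preimage f
  rw [front_pre]
  have hQ' : ∃ x, p (f x) = 0 := by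
    obtain ⟨x, hx⟩ := hQ
    exact ⟨f.symm x, by simpa using hx⟩
  rcases h with ⟨c, hc⟩ | ⟨κ, m, hm, hκ, h⟩
  · exact forwardA hn hc (hG.comp f) hQ'
  · exact forwardB hn hm hκ h (hG.comp f) hQ'

lemma forward {n : ℕ} (hn : 2 ≤ n) {S : Set (En n)} (h : IsConvexQuadric S) : Canon hn S := by
  obtain ⟨Q, U, ⟨hQ, hne⟩, hU, hc, rfl⟩ := h
  obtain ⟨p, hp, rfl⟩ := isQuad_of_surface hQ
  obtain ⟨x, hx⟩ := hne
  have hx0 : p x = 0 := hx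
  rcases good_of_component hp.continuous hU hc with hG | hG
  · exact forward_good hn hp hG ⟨x, hx0⟩
  · exact forward_good hn hp.neg hG ⟨x, by simp [hx0]⟩

lemma rev {n : ℕ} {S F V : Set (En n)} {f : En n ≃ᵃⁱ[ℝ] En n} (hS : S.Nonempty) (hSF : f '' S = F)
    (hF : frontier V = F) (hV : IsOpen V) (hc : Convex ℝ V) {p : En n → ℝ} (hp : IsQuad p)
    (h1 : ∀ x ∈ V, p x ≠ 0) (h2 : ∀ x ∈ F, p x = 0) : IsConvexQuadric S := by
  have hSf : S = frontier (f ⁻¹' V) := by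
    rw [← front_pre, hF, ← hSF]
    exact (preimage_image_eq S f.injective).symm
  obtain ⟨x, hx⟩ := hS
  have hxF : f x ∈ F := by rw [← hSF]; exact ⟨x, hx, rfl⟩
  have hVne : V.Nonempty := by
    by_contra hcon
    rw [not_nonempty_iff_eq_empty] at hcon
    rw [← hF, hcon] at hxF
    simp at hxF
  rw [hSf]
  refine isConvexQuadric_of (hp.comp f) (hV.preimage f.continuous)
    (hc.affine_preimage f.toAffineEquiv.toAffineMap) ?_ ⟨x, h2 _ hxF⟩ (fun y hy => h1 _ hy) ?_
  · obtain ⟨y, hy⟩ := hVne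
    exact ⟨f.symm y, by simpa using hy⟩
  · intro y hy
    rw [← front_pre, hF] at hy
    exact h2 _ hy

lemma isQuad_P {n : ℕ} (P : Finset (Fin n)) (a : Fin n → ℝ) (k : Fin n) (d e c : ℝ) (i0 : Fin n)
    (h : (if i0 ∈ P then a i0 else 0) + (if i0 = k then d else 0) ≠ 0) :
    IsQuad (fun x : En n => ∑ i ∈ P, a i * x i ^ 2 + d * x k ^ 2 + e * x k + c) := by
  have := isQuad_diag (fun i => (if i ∈ P then a i else 0) + (if i = k then d else 0))
    (fun i => if i = k then e / 2 else 0) c i0 h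
  convert this using 2 with x
  simp only [add_mul, Finset.sum_add_distrib, ite_mul, zero_mul, Finset.sum_ite_mem,
    Finset.univ_inter, Finset.sum_ite_eq', Finset.mem_univ, if_true]
  ring

lemma open2 {n : ℕ} (P : Finset (Fin n)) (a : Fin n → ℝ) (k : Fin n) (c a0 : ℝ) :
    IsOpen {x : En n | ∑ i ∈ P, a i * x i ^ 2 + c < a0 * x k ^ 2 ∧ 0 < x k} := by
  have hcs := sq_cont P a
  have h1 : IsOpen {x : En n | ∑ i ∈ P, a i * x i ^ 2 + c < a0 * x k ^ 2} :=
    isOpen_lt (by fun_prop) (by fun_prop)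
  have h2 : IsOpen {x : En n | 0 < x k} := isOpen_lt (by fun_prop) (by fun_prop)
  exact h1.inter h2

lemma rev24 {n : ℕ} {S : Set (En n)} {f : En n ≃ᵃⁱ[ℝ] En n} (hS : S.Nonempty)
    {P : Finset (Fin n)} {a : Fin n → ℝ} (ha : ∀ i ∈ P, 0 < a i) {k : Fin n}
    (hk : k ∉ P) {c : ℝ} (hc : 0 ≤ c) {a0 : ℝ} (h0 : 0 < a0)
    (hSF : f '' S = {x : En n | a0 * x k ^ 2 - ∑ i ∈ P, a i * x i ^ 2 = c ∧ 0 ≤ x k}) :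
    IsConvexQuadric S := by
  refine rev hS hSF (front2 ha hk hc h0) (open2 P a k c a0) (conv2 ha hc)
    (isQuad_P P a k (-a0) 0 c k (by simp [hk, h0.ne'])) ?_ ?_
  · rintro x ⟨h1, h2⟩
    simp only
    linarith
  · rintro x ⟨h1, h2⟩
    simp only
    linarith

lemma backward {n : ℕ} (hn : 2 ≤ n) {S : Set (En n)} (hS : S.Nonempty) (h : Canon hn S) :
    IsConvexQuadric S := by
  obtain ⟨f, h⟩ := h
  rcases h with ⟨k, hk1, hkn, a, ha, hF⟩ | ⟨k, hk1, hkn, a, ha, hF⟩ | hF | ⟨k, hk1, hkn, a, ha, hF⟩ |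
    ⟨κ, hκ, a, ha, hF⟩
  · have hcs := sq_cont (Finset.univ.filter (fun i : Fin n => (i : ℕ) < k)) a
    have h0 := ha (z0 hn) hk1
    refine rev hS hF front1 (isOpen_lt hcs continuous_const)
      (conv1 fun i hi => ha i (by simpa using hi))
      (isQuad_P (Finset.univ.filter (fun i : Fin n => (i : ℕ) < k)) a (z0 hn) 0 0 (-1) (z0 hn) ?_) ?_ ?_
    · have : 0 < k := hk1
      simp [this, h0.ne']
    · intro x hx
      simp only [mem_ofPred_eq] at hx ⊢
      linarith
    · intro x hx
      simp only [mem_ofPred_eq] at hx ⊢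
      linarith
  · exact rev24 hS (fun i hi => ha i (by simp at hi; omega)) (by simp) zero_le_one
      (ha (z0 hn) (by simp; omega)) hF
  · refine rev24 hS (P := ∅) (a := fun _ => 1) (c := 0) (a0 := 1) (k := (z0 hn)) (f := f)
      (by simp) (by simp) le_rfl one_pos ?_
    rw [hF]
    ext x
    simp
    intro h
    rw [h]
  · exact rev24 hS (fun i hi => ha i (by simp at hi; omega)) (by simp) le_rfl
      (ha (z0 hn) (by simp; omega)) hF
  · have hcs := sq_cont (Finset.univ.filter (fun i : Fin n => (i : ℕ) < κ)) a
    have h0 := ha (z0 hn) hκ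
    refine rev hS hF (front5 (by simp)) (isOpen_lt hcs (by fun_prop))
      (conv5 fun i hi => ha i (by simpa using hi))
      (isQuad_P (Finset.univ.filter (fun i : Fin n => (i : ℕ) < κ)) a κ 0 (-1) 0 (z0 hn) ?_) ?_ ?_
    · have : z0 hn < κ := hκ
      simp [this, h0.ne']
    · intro x hx
      simp only [mem_ofPred_eq] at hx ⊢
      linarith
    · intro x hx
      simp only [mem_ofPred_eq] at hx ⊢
      linarith

lemma surface_nonempty {n : ℕ} {S : Set (En n)} (hS : IsConvexSurface S) : S.Nonempty := by
  obtain ⟨K, hK, hi, hne, rfl⟩ := hS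
  rw [nonempty_frontier_iff]
  exact ⟨hi.mono interior_subset, hne⟩

/-- a convex surface S ⊆ ℝⁿ (n ≥ 2) is a convex quadric if and only if, in
suitable Cartesian coordinates (i.e. after an affine isometry of ℝⁿ), S takes one of the
five canonical forms. -/
theorem convex_surface_is_convex_quadric_iff
    {n : ℕ} (hn : 2 ≤ n) (S : Set (En n)) (hS : IsConvexSurface S) :
    IsConvexQuadric S ↔
      ∃ f : En n ≃ᵃⁱ[ℝ] En n,
        -- (1) a₁ξ₁² + ⋯ + a_kξ_k² = 1,  1 ≤ k ≤ n
        (∃ k : ℕ, 1 ≤ k ∧ k ≤ n ∧ ∃ a : Fin n → ℝ, (∀ i : Fin n, (i : ℕ) < k → 0 < a i) ∧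
          f '' S = {x : En n |
            ∑ i ∈ Finset.univ.filter (fun i : Fin n => (i : ℕ) < k), a i * x i ^ 2 = 1}) ∨
        -- (2) a₁ξ₁² − a₂ξ₂² − ⋯ − a_kξ_k² = 1, ξ₁ ≥ 0,  2 ≤ k ≤ n
        (∃ k : ℕ, 2 ≤ k ∧ k ≤ n ∧ ∃ a : Fin n → ℝ, (∀ i : Fin n, (i : ℕ) < k → 0 < a i) ∧
          f '' S = {x : En n |
            a ⟨0, by omega⟩ * x ⟨0, by omega⟩ ^ 2 -
              ∑ i ∈ Finset.univ.filter (fun i : Fin n => 1 ≤ (i : ℕ) ∧ (i : ℕ) < k),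
                a i * x i ^ 2 = 1 ∧ 0 ≤ x ⟨0, by omega⟩}) ∨
        -- (3) ξ₁ = 0
        (f '' S = {x : En n | x ⟨0, by omega⟩ = 0}) ∨
        -- (4) a₁ξ₁² − a₂ξ₂² − ⋯ − a_kξ_k² = 0, ξ₁ ≥ 0,  2 ≤ k ≤ n
        (∃ k : ℕ, 2 ≤ k ∧ k ≤ n ∧ ∃ a : Fin n → ℝ, (∀ i : Fin n, (i : ℕ) < k → 0 < a i) ∧
          f '' S = {x : En n |
            a ⟨0, by omega⟩ * x ⟨0, by omega⟩ ^ 2 -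
              ∑ i ∈ Finset.univ.filter (fun i : Fin n => 1 ≤ (i : ℕ) ∧ (i : ℕ) < k),
                a i * x i ^ 2 = 0 ∧ 0 ≤ x ⟨0, by omega⟩}) ∨
        -- (5) a₁ξ₁² + ⋯ + a_{k−1}ξ_{k−1}² = ξ_k,  2 ≤ k ≤ n  (κ : Fin n is the index of ξ_k)
        (∃ κ : Fin n, 1 ≤ (κ : ℕ) ∧ ∃ a : Fin n → ℝ, (∀ i : Fin n, (i : ℕ) < (κ : ℕ) → 0 < a i) ∧
          f '' S = {x : En n |
            ∑ i ∈ Finset.univ.filter (fun i : Fin n => (i : ℕ) < (κ : ℕ)), a i * x i ^ 2 = x κ}) := by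
  exact ⟨fun h => forward hn h, fun h => backward hn (surface_nonempty hS) h⟩
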